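/- Let d ≥ 2 and p ≥ 2, and let Ω ⊂ ℝ^d be a bounded measurable set with finite Lebesgue measure. Let Φ : ℝ^{d×d} → [0, ∞) be twice continuously differentiable on a neighborhood of SO(d), frame-indifferent (Φ(QF) = Φ(F) for all Q ∈ SO(d), F ∈ ℝ^{d×d}), with Φ(R) = 0 for all R ∈ SO(d) and Φ(F) ≥ g_p(dist(F, SO(d))) for all F ∈ ℝ^{d×d}. Let ε_j → 0⁺, let (F_j) ⊂ L²(Ω; ℝ^{d×d}) converge weakly in L² to F (i.e. ∫_Ω F_j : G dx → ∫_Ω F : G dx for every G ∈ L²(Ω; ℝ^{d×d})), and let (G_j) ⊂ L^∞(Ω; ℝ^{d×d}) with sup_j ‖G_j‖_{L^∞} < ∞ converge strongly in L²(Ω; ℝ^{d×d}) to G. Then liminf_{j→∞} ε_j^{−2} ∫_Ω Φ(exp(ε_j G_j(x)) (I + ε_j F_j(x))) dx ≥ (1/2) ∫_Ω D²Φ(I)[F(x) + G(x), F(x) + G(x)] dx. -/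

import Mathlib

/-!
Put `A_j = ε_j⁻¹ (exp (ε_j G_j) (1 + ε_j F_j) - 1)`, so that the `j`-th energy density is
`ε_j⁻² Φ (1 + ε_j A_j)`. The uniform bound on `G_j` gives `A_j - (F_j + G_j) → 0` in `L²`, hence
`A_j ⇀ A = F + G` weakly in `L²`.

Write `B = D²Φ(1)`, which is positive semidefinite because `1` minimizes `Φ`. Given `δ > 0`,
Taylor's formula yields `ε_j⁻² Φ (1 + ε_j A_j) ≥ ½ B(A_j, A_j) - δ |A_j|²` on the set `S_j` where
`ε_j A_j` is small, and there `½ B(A_j, A_j) ≥ B(A_j, A) - ½ B(A, A)` by convexity; off `S_j`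
only `Φ ≥ 0` is used. With `W_j = 𝟙_{S_j} A` the energy is therefore at least
`∫ B(A_j, W_j) - ½ B(W_j, W_j) - δ |A_j|²`. The complement of `S_j` has measure tending to `0`, so
`W_j → A` strongly, and pairing it with `A_j ⇀ A` gives the limit `½ ∫ B(A, A)` up to `O(δ)`.
-/

open Matrix MeasureTheory Filter Topology

attribute [local instance] Matrix.frobeniusNormedAddCommGroup Matrix.frobeniusNormedSpace

/-- `SO(d)`: real `d×d` matrices `Q` with `QᵀQ = I` and `det Q = 1`. -/
def SOd (d : ℕ) : Set (Matrix (Fin d) (Fin d) ℝ) :=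
  {Q | Qᵀ * Q = 1 ∧ Q.det = 1}

/-- For `p > 1`, `g_p(t) = t^2/2` if `0 ≤ t ≤ 1` and `g_p(t) = t^p/p + 1/2 - 1/p` if `t > 1`. -/
noncomputable def gp (p t : ℝ) : ℝ := if t ≤ 1 then t ^ 2 / 2 else t ^ p / p + 1 / 2 - 1 / p

section Taylor

open scoped Asymptotics

variable {E F : Type*} [NormedAddCommGroup E] [NormedSpace ℝ E]
  [NormedAddCommGroup F] [NormedSpace ℝ F]

theorem isLittleO_taylor_two {f : E → F} {x : E} (hf : ContDiffAt ℝ 2 f x) :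
    (fun y ↦ f y - f x - fderiv ℝ f x (y - x)
      - (1 / 2 : ℝ) • fderiv ℝ (fderiv ℝ f) x (y - x) (y - x)) =o[𝓝 x]
      fun y ↦ ‖y - x‖ ^ 2 := by
  set B := fderiv ℝ (fderiv ℝ f) x
  have symm (v w : E) : B v w = B w v := hf.isSymmSndFDerivAt (by simp) v w
  have hfderiv : HasFDerivAt (fderiv ℝ f) B x :=
    ((hf.fderiv_right (m := 1) (by norm_num)).differentiableAt (by norm_num)).hasFDerivAt
  have hdiff : ∀ᶠ y in 𝓝 x, DifferentiableAt ℝ f y :=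
    (hf.eventually (by simp)).mono fun y hy ↦ hy.differentiableAt (by norm_num)
  obtain ⟨r, hr, hball⟩ := Metric.eventually_nhds_iff_ball.1 hdiff
  have hderiv (y : E) (hy : y ∈ Metric.ball x r) :
      HasFDerivWithinAt
        (fun y ↦ f y - fderiv ℝ f x (y - x) - (1 / 2 : ℝ) • B (y - x) (y - x))
        (fderiv ℝ f y - fderiv ℝ f x - B (y - x)) (Metric.ball x r) y := by
    have hsub : HasFDerivAt (fun y : E ↦ y - x) (ContinuousLinearMap.id ℝ E) y :=
      (hasFDerivAt_id y).sub_const x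
    have hquad := ((B.hasFDerivAt.comp y hsub).clm_apply hsub).const_smul (1 / 2 : ℝ)
    refine (((hball y hy).hasFDerivAt.sub ((fderiv ℝ f x).hasFDerivAt.comp y hsub)).sub
      hquad |>.congr_fderiv ?_).hasFDerivWithinAt
    ext v
    simp [symm v, ← two_smul ℝ, smul_smul]
  have hball_mem := Metric.ball_mem_nhds x hr
  have hsucc := (convex_ball x r).isLittleO_pow_succ (n := 1) (Metric.mem_ball_self hr) hderiv
  simp only [nhdsWithin_eq_nhds.2 hball_mem] at hsucc
  refine (hsucc ?_).congr_left fun y ↦ ?_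
  · simpa using (hasFDerivAt_iff_isLittleO.1 hfderiv).norm_right
  · simp only [map_sub, _root_.sub_apply, sub_self, map_zero, sub_zero, smul_zero]
    abel

theorem fderiv_fderiv_nonneg_of_isLocalMin {f : E → ℝ} {x : E} (hx : IsLocalMin f x)
    (hf : ContDiffAt ℝ 2 f x) (v : E) : 0 ≤ fderiv ℝ (fderiv ℝ f) x v v := by
  have hline : Tendsto (fun t : ℝ ↦ x + t • v) (𝓝[≠] 0) (𝓝 x) :=
    tendsto_nhdsWithin_of_tendsto_nhds <| Continuous.tendsto' (by fun_prop) _ _ (by simp)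
  have hrem : (fun t : ℝ ↦ f (x + t • v) - f x - t ^ 2 * (1 / 2 * fderiv ℝ (fderiv ℝ f) x v v))
      =o[𝓝[≠] 0] fun t ↦ t ^ 2 := by
    refine ((isLittleO_taylor_two hf).comp_tendsto hline).trans_isBigO ?_ |>.congr_left fun t ↦ ?_
    · refine .of_bound (‖v‖ ^ 2) (.of_forall fun t ↦ ?_)
      simp [norm_smul, mul_pow, mul_comm]
    · simp only [hx.fderiv_eq_zero, _root_.zero_apply, sub_zero, Function.comp_apply,
        add_sub_cancel_left, map_smul, _root_.smul_apply, smul_eq_mul]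
      ring
  have hlim := hrem.tendsto_div_nhds_zero
  have h : 0 ≤ 1 / 2 * fderiv ℝ (fderiv ℝ f) x v v := by
    have hquot : Tendsto (fun t : ℝ ↦ (f (x + t • v) - f x) / t ^ 2) (𝓝[≠] 0)
        (𝓝 (1 / 2 * fderiv ℝ (fderiv ℝ f) x v v)) := by
      refine (zero_add (1 / 2 * fderiv ℝ (fderiv ℝ f) x v v) ▸ hlim.add_const _).congr' ?_
      filter_upwards [self_mem_nhdsWithin] with t ht
      have : t ≠ 0 := ht
      field_simp
      ring
    refine ge_of_tendsto hquot ?_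
    filter_upwards [hline.eventually hx] with t ht
    exact div_nonneg (sub_nonneg.2 ht) (sq_nonneg t)
  linarith

end Taylor

section Exp

open scoped Nat

variable {𝔸 : Type*} [NormedRing 𝔸] [NormedAlgebra ℝ 𝔸] [CompleteSpace 𝔸]

theorem norm_exp_sub_sum_range_le (x : 𝔸) {n : ℕ} (hn : n ≠ 0) :
    ‖NormedSpace.exp x - ∑ m ∈ Finset.range n, (m !⁻¹ : ℝ) • x ^ m‖ ≤
      ‖x‖ ^ n * Real.exp ‖x‖ := by
  have hexp : HasSum (fun m ↦ (m !⁻¹ : ℝ) • x ^ m) (NormedSpace.exp x) :=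
    NormedSpace.exp_series_hasSum_exp' x
  have hreal : HasSum (fun m ↦ ‖x‖ ^ n * ((m !⁻¹ : ℝ) • ‖x‖ ^ m)) (‖x‖ ^ n * Real.exp ‖x‖) :=
    Real.exp_eq_exp_ℝ ▸ (NormedSpace.exp_series_hasSum_exp' (𝕂 := ℝ) ‖x‖).mul_left _
  refine ((hasSum_nat_add_iff' n).2 hexp).norm_le_of_bounded hreal fun m ↦ ?_
  calc ‖((m + n)!⁻¹ : ℝ) • x ^ (m + n)‖
      = ((m + n)!⁻¹ : ℝ) * ‖x ^ (m + n)‖ := by simp [norm_smul]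
    _ ≤ (m !⁻¹ : ℝ) * ‖x‖ ^ (m + n) := by
        gcongr
        · exact Nat.le_add_right m n
        · exact norm_pow_le' x (by lia)
    _ = ‖x‖ ^ n * ((m !⁻¹ : ℝ) • ‖x‖ ^ m) := by rw [smul_eq_mul]; ring

end Exp

section WeakConvergence

variable {ι 𝕜 X Y : Type*} [RCLike 𝕜] [NormedAddCommGroup X] [NormedSpace 𝕜 X]
  [NormedAddCommGroup Y] [NormedSpace 𝕜 Y]

theorem tendsto_toWeakSpace_iff {l : Filter ι} {u : ι → X} {x : X} :
    Tendsto (fun i ↦ toWeakSpace 𝕜 X (u i)) l (𝓝 (toWeakSpace 𝕜 X x)) ↔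
      ∀ ℓ : StrongDual 𝕜 X, Tendsto (fun i ↦ ℓ (u i)) l (𝓝 (ℓ x)) := by
  refine WeakBilin.tendsto_iff_forall_eval_tendsto (topDualPairing 𝕜 X).flip fun x y hxy ↦ ?_
  exact SeparatingDual.eq_iff_forall_dual_eq.2 fun ℓ ↦ LinearMap.congr_fun hxy ℓ

theorem tendsto_toWeakSpace_of_tendsto {l : Filter ι} {u : ι → X} {x : X}
    (hu : Tendsto u l (𝓝 x)) :
    Tendsto (fun i ↦ toWeakSpace 𝕜 X (u i)) l (𝓝 (toWeakSpace 𝕜 X x)) :=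
  ((toWeakSpaceCLM 𝕜 X).continuous.tendsto x).comp hu

theorem exists_norm_le_of_tendsto_toWeakSpace {u : ℕ → X} {x : X}
    (hu : Tendsto (fun n ↦ toWeakSpace 𝕜 X (u n)) atTop (𝓝 (toWeakSpace 𝕜 X x))) :
    ∃ C, ∀ n, ‖u n‖ ≤ C := by
  have hpointwise (ℓ : StrongDual 𝕜 X) :
      ∃ C, ∀ n, ‖NormedSpace.inclusionInDoubleDual 𝕜 X (u n) ℓ‖ ≤ C :=
    have ⟨C, hC⟩ := (tendsto_toWeakSpace_iff.1 hu ℓ).norm.bddAbove_range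
    ⟨C, fun n ↦ hC ⟨n, rfl⟩⟩
  obtain ⟨C, hC⟩ := banach_steinhaus hpointwise
  exact ⟨C, fun n ↦ ((NormedSpace.inclusionInDoubleDualLi 𝕜).norm_map (u n)).ge.trans (hC n)⟩

theorem tendsto_clm_apply_of_tendsto_toWeakSpace {l : Filter ι} {u : ι → X} {x : X} {v : ι → Y}
    {y : Y} {C : ℝ} (b : X →L[𝕜] Y →L[𝕜] 𝕜)
    (hu : Tendsto (fun i ↦ toWeakSpace 𝕜 X (u i)) l (𝓝 (toWeakSpace 𝕜 X x)))
    (hC : ∀ i, ‖u i‖ ≤ C) (hv : Tendsto v l (𝓝 y)) :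
    Tendsto (fun i ↦ b (u i) (v i)) l (𝓝 (b x y)) := by
  have hsmall : Tendsto (fun i ↦ b (u i) (v i - y)) l (𝓝 0) := by
    have hnorm : Tendsto (fun i ↦ ‖b‖ * C * ‖v i - y‖) l (𝓝 0) := by
      simpa using (tendsto_iff_norm_sub_tendsto_zero.1 hv).const_mul (‖b‖ * C)
    refine squeeze_zero_norm (fun i ↦ (b.le_opNorm₂ _ _).trans ?_) hnorm
    gcongr
    exact hC i
  simpa using hsmall.add (tendsto_toWeakSpace_iff.1 hu (b.flip y))

theorem tendsto_apply_sub_half_apply_self_of_tendsto_toWeakSpace {X : Type*}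
    [NormedAddCommGroup X] [NormedSpace ℝ X] {l : Filter ι} {u w : ι → X} {v : X} {C : ℝ}
    (b : X →L[ℝ] X →L[ℝ] ℝ)
    (hu : Tendsto (fun i ↦ toWeakSpace ℝ X (u i)) l (𝓝 (toWeakSpace ℝ X v)))
    (hC : ∀ i, ‖u i‖ ≤ C) (hw : Tendsto w l (𝓝 v)) :
    Tendsto (fun i ↦ b (u i) (w i) - 1 / 2 * b (w i) (w i)) l (𝓝 (1 / 2 * b v v)) := by
  have hself : Tendsto (fun i ↦ b (w i) (w i)) l (𝓝 (b v v)) :=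
    (b.continuous₂.tendsto (v, v)).comp (hw.prodMk_nhds hw)
  convert (tendsto_clm_apply_of_tendsto_toWeakSpace b hu hC hw).sub (hself.const_mul (1 / 2))
    using 2
  ring

theorem tendsto_toWeakSpace_of_forall_inner {H : Type*} [NormedAddCommGroup H]
    [InnerProductSpace 𝕜 H] [CompleteSpace H] {l : Filter ι} {u : ι → H} {x : H}
    (hu : ∀ y : H, Tendsto (fun i ↦ inner 𝕜 y (u i)) l (𝓝 (inner 𝕜 y x))) :
    Tendsto (fun i ↦ toWeakSpace 𝕜 H (u i)) l (𝓝 (toWeakSpace 𝕜 H x)) :=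
  tendsto_toWeakSpace_iff.2 fun ℓ ↦ by
    simpa only [InnerProductSpace.toDual_symm_apply] using
      hu ((InnerProductSpace.toDual 𝕜 H).symm ℓ)

end WeakConvergence

section Pointwise

variable {E : Type*} [NormedAddCommGroup E] [NormedSpace ℝ E]

theorem sub_half_apply_self_le_half_apply_self {B : E →L[ℝ] E →L[ℝ] ℝ}
    (hsymm : ∀ u v, B u v = B v u) (hnonneg : ∀ v, 0 ≤ B v v) (u v : E) :
    B u v - 1 / 2 * B v v ≤ 1 / 2 * B u u := by
  have hsq := hnonneg (u - v)
  simp only [map_sub, _root_.sub_apply, hsymm v u] at hsq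
  linarith

theorem exists_half_fderiv_fderiv_sub_le_of_isLocalMin {f : E → ℝ} {x : E} (hx : IsLocalMin f x)
    (hf : ContDiffAt ℝ 2 f x) {δ : ℝ} (hδ : 0 < δ) :
    ∃ r > 0, ∀ h : E, ‖h‖ < r →
      1 / 2 * fderiv ℝ (fderiv ℝ f) x h h - δ * ‖h‖ ^ 2 ≤ f (x + h) - f x := by
  obtain ⟨r, hr, hball⟩ :=
    Metric.eventually_nhds_iff_ball.1 ((isLittleO_taylor_two hf).bound hδ)
  refine ⟨r, hr, fun h hh ↦ ?_⟩
  have hbound := hball (x + h) (by simpa using hh)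
  simp only [hx.fderiv_eq_zero, add_sub_cancel_left, _root_.zero_apply, sub_zero,
    smul_eq_mul, Real.norm_eq_abs, abs_pow, abs_norm] at hbound
  linarith [neg_le_of_abs_le hbound]

theorem exists_fderiv_fderiv_sub_le_inv_sq_mul {f : E → ℝ} {x : E} (hnonneg : ∀ y, 0 ≤ f y)
    (hzero : f x = 0) (hf : ContDiffAt ℝ 2 f x) {δ : ℝ} (hδ : 0 < δ) :
    ∃ r > 0, ∀ c : ℝ, c ≠ 0 → ∀ u w : E, ‖c • u‖ < r ∨ w = 0 →
      fderiv ℝ (fderiv ℝ f) x u w - 1 / 2 * fderiv ℝ (fderiv ℝ f) x w w - δ * ‖u‖ ^ 2 ≤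
        c⁻¹ ^ 2 * f (x + c • u) := by
  have hmin : IsLocalMin f x := .of_forall fun y ↦ hzero ▸ hnonneg y
  obtain ⟨r, hr, hlower⟩ := exists_half_fderiv_fderiv_sub_le_of_isLocalMin hmin hf hδ
  refine ⟨r, hr, fun c hc u w hw ↦ ?_⟩
  rcases hw with hsmall | rfl
  · have hconvex := sub_half_apply_self_le_half_apply_self
      (hf.isSymmSndFDerivAt (by simp)) (fderiv_fderiv_nonneg_of_isLocalMin hmin hf) u w
    calc _ ≤ 1 / 2 * fderiv ℝ (fderiv ℝ f) x u u - δ * ‖u‖ ^ 2 := by linarith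
      _ = c⁻¹ ^ 2 * (1 / 2 * fderiv ℝ (fderiv ℝ f) x (c • u) (c • u) - δ * ‖c • u‖ ^ 2) := by
        simp only [map_smul, _root_.smul_apply, smul_eq_mul, norm_smul, Real.norm_eq_abs, mul_pow,
          sq_abs]
        field_simp
      _ ≤ c⁻¹ ^ 2 * f (x + c • u) := by
        gcongr
        simpa [hzero] using hlower (c • u) hsmall
  · have := hnonneg (x + c • u)
    simp only [map_zero, mul_zero, sub_zero, zero_sub]
    exact (neg_nonpos.2 (by positivity)).trans (by positivity)

end Pointwise

section Lp

open scoped ENNReal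

variable {ι α E : Type*} [MeasurableSpace α] {μ : Measure α} [NormedAddCommGroup E]
  {p : ℝ≥0∞} {l : Filter ι}

theorem tendsto_toLp_indicator [Fact (1 ≤ p)] (hp : p ≠ ∞) {f : α → E} (hf : MemLp f p μ)
    {s : ι → Set α} (hs : ∀ i, MeasurableSet (s i))
    (hμs : Tendsto (fun i ↦ μ (s i)ᶜ) l (𝓝 0)) :
    Tendsto (fun i ↦ (hf.indicator (hs i)).toLp _) l (𝓝 (hf.toLp f)) := by
  rw [Lp.tendsto_Lp_iff_tendsto_eLpNorm'', ENNReal.tendsto_nhds_zero]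
  intro η hη
  obtain ⟨η', -, hη'η⟩ := ENNReal.lt_iff_exists_real_btwn.1 hη
  obtain ⟨δ, hδ, hsmall⟩ := hf.eLpNorm_indicator_le Fact.out hp (ENNReal.ofReal_pos.1 hη'η.1)
  filter_upwards [ENNReal.tendsto_nhds_zero.1 hμs _ (ENNReal.ofReal_pos.2 hδ)] with i hi
  have hcompl : (s i).indicator f - f = -(s i)ᶜ.indicator f := by
    rw [Set.indicator_compl, neg_sub]
  rw [hcompl, eLpNorm_neg]
  exact (hsmall _ (hs i).compl hi).trans hη'η.2.le

theorem tendsto_measure_le_norm_smul [NormedSpace ℝ E] [Fact (1 ≤ p)] {u : ι → Lp E p μ}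
    {C : ℝ} (hu : ∀ i, ‖u i‖ ≤ C) {ε : ι → ℝ} (hε : Tendsto ε l (𝓝 0)) {r : ℝ} (hr : 0 < r) :
    Tendsto (fun i ↦ μ {x | r ≤ ‖ε i • u i x‖}) l (𝓝 0) := by
  have hLp : Tendsto (fun i ↦ ε i • u i) l (𝓝 0) :=
    NormedField.tendsto_zero_smul_of_tendsto_zero_of_bounded hε (isBoundedUnder_of ⟨C, hu⟩)
  have hmeas := tendstoInMeasure_of_tendsto_Lp hLp
  refine (tendstoInMeasure_iff_norm.1 hmeas r hr).congr fun i ↦ measure_congr ?_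
  filter_upwards [Lp.coeFn_smul (ε i) (u i), Lp.coeFn_zero E p μ] with x hsmul hzero
  exact congrArg (r ≤ ‖·‖) (by rw [hsmul, hzero, Pi.zero_apply, sub_zero, Pi.smul_apply])

theorem ofReal_integral_le_lintegral_ofReal {f : α → ℝ} (hf : Integrable f μ) :
    ENNReal.ofReal (∫ x, f x ∂μ) ≤ ∫⁻ x, ENNReal.ofReal (f x) ∂μ := by
  rw [integral_eq_lintegral_pos_part_sub_lintegral_neg_part hf]
  exact (ENNReal.ofReal_le_ofReal (sub_le_self _ ENNReal.toReal_nonneg)).trans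
    ENNReal.ofReal_toReal_le

theorem integral_norm_sq_eq_norm_sq (u : Lp E 2 μ) : ∫ x, ‖u x‖ ^ 2 ∂μ = ‖u‖ ^ 2 := by
  have hnonneg : 0 ≤ ∫ x, ‖u x‖ ^ 2 ∂μ := integral_nonneg fun x ↦ by positivity
  rw [Lp.norm_def, (Lp.memLp u).eLpNorm_eq_integral_rpow_norm two_ne_zero ENNReal.ofNat_ne_top,
    ENNReal.toReal_ofReal (by positivity), ENNReal.toReal_ofNat]
  simp only [Real.rpow_ofNat]
  rw [← Real.rpow_mul_natCast hnonneg, Nat.cast_ofNat, inv_mul_cancel₀ two_ne_zero, Real.rpow_one]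

end Lp

section LowerSemicontinuity

open scoped ENNReal

variable {ι α E : Type*} [MeasurableSpace α] {μ : Measure α} [NormedAddCommGroup E]
  [NormedSpace ℝ E]

theorem integrable_clm_apply {F G : Type*} [NormedAddCommGroup F] [NormedSpace ℝ F]
    [NormedAddCommGroup G] [NormedSpace ℝ G] {p q : ℝ≥0∞} [p.HolderConjugate q]
    (B : E →L[ℝ] F →L[ℝ] G) (u : Lp E p μ) (v : Lp F q μ) :
    Integrable (fun x ↦ B (u x) (v x)) μ :=
  memLp_one_iff_integrable.1 (B.memLp_of_bilin 1 (Lp.memLp u) (Lp.memLp v))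

theorem ofReal_lpPairing_sub_le_lintegral (B : E →L[ℝ] E →L[ℝ] ℝ) (u w : Lp E 2 μ) (δ : ℝ)
    {g : α → ℝ}
    (hg : ∀ᵐ x ∂μ, B (u x) (w x) - 1 / 2 * B (w x) (w x) - δ * ‖u x‖ ^ 2 ≤ g x) :
    ENNReal.ofReal (B.lpPairing μ 2 2 u w - 1 / 2 * B.lpPairing μ 2 2 w w - δ * ‖u‖ ^ 2) ≤
      ∫⁻ x, ENNReal.ofReal (g x) ∂μ := by
  have huw := integrable_clm_apply B u w
  have hww := (integrable_clm_apply B w w).const_mul (1 / 2)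
  have hsub : Integrable (fun x ↦ B (u x) (w x) - 1 / 2 * B (w x) (w x)) μ := huw.sub hww
  have huu : Integrable (fun x ↦ δ * ‖u x‖ ^ 2) μ := (Lp.memLp u).norm.integrable_sq.const_mul δ
  calc _ = ENNReal.ofReal
        (∫ x, B (u x) (w x) - 1 / 2 * B (w x) (w x) - δ * ‖u x‖ ^ 2 ∂μ) := by
        rw [integral_sub hsub huu, integral_sub huw hww, integral_const_mul,
          integral_const_mul, integral_norm_sq_eq_norm_sq, B.lpPairing_eq_integral,
          B.lpPairing_eq_integral]
    _ ≤ ∫⁻ x, ENNReal.ofReal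
        (B (u x) (w x) - 1 / 2 * B (w x) (w x) - δ * ‖u x‖ ^ 2) ∂μ :=
      ofReal_integral_le_lintegral_ofReal (hsub.sub huu)
    _ ≤ _ := lintegral_mono_ae (hg.mono fun x hx ↦ ENNReal.ofReal_le_ofReal hx)

theorem exists_tendsto_Lp_forall_norm_smul_lt_or_eq_zero {p : ℝ≥0∞}
    [Fact (1 ≤ p)] (hp : p ≠ ∞) {l : Filter ι} {u : ι → Lp E p μ} {C : ℝ} (hu : ∀ i, ‖u i‖ ≤ C)
    {ε : ι → ℝ} (hε : Tendsto ε l (𝓝 0)) {r : ℝ} (hr : 0 < r) (v : Lp E p μ) :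
    ∃ w : ι → Lp E p μ, Tendsto w l (𝓝 v) ∧
      ∀ i, ∀ᵐ x ∂μ, ‖ε i • u i x‖ < r ∨ w i x = 0 := by
  have hs (i : ι) : MeasurableSet {x | ‖ε i • u i x‖ < r} :=
    ((Lp.stronglyMeasurable (u i)).const_smul (ε i)).norm.measurableSet_lt
      stronglyMeasurable_const
  refine ⟨fun i ↦ ((Lp.memLp v).indicator (hs i)).toLp _, ?_, fun i ↦ ?_⟩
  · have htrunc := tendsto_toLp_indicator hp (Lp.memLp v) hs (l := l)
    rw [Lp.toLp_coeFn] at htrunc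
    refine htrunc ((tendsto_measure_le_norm_smul hu hε hr).congr fun i ↦ ?_)
    simp [Set.compl_ofPred]
  · filter_upwards [((Lp.memLp v).indicator (hs i)).coeFn_toLp] with x hx
    by_cases hxs : ‖ε i • u i x‖ < r
    · exact .inl hxs
    · exact .inr (by rw [hx, Set.indicator_of_notMem (by exact hxs)])

theorem ofReal_half_lpPairing_sub_le_liminf {l : Filter ι} [l.NeBot] {u : ι → Lp E 2 μ}
    {v : Lp E 2 μ} {C : ℝ} (hC : ∀ i, ‖u i‖ ≤ C)
    (hu : Tendsto (fun i ↦ toWeakSpace ℝ (Lp E 2 μ) (u i)) l (𝓝 (toWeakSpace ℝ (Lp E 2 μ) v)))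
    {ε : ι → ℝ} (hε_ne : ∀ i, ε i ≠ 0) (hε : Tendsto ε l (𝓝 0)) {f : E → ℝ} {x₀ : E}
    (hnonneg : ∀ y, 0 ≤ f y) (hzero : f x₀ = 0) (hf : ContDiffAt ℝ 2 f x₀) {δ : ℝ} (hδ : 0 < δ) :
    ENNReal.ofReal
        (1 / 2 * (fderiv ℝ (fderiv ℝ f) x₀).lpPairing μ 2 2 v v - δ * C ^ 2) ≤
      liminf (fun i ↦ ∫⁻ x, ENNReal.ofReal ((ε i)⁻¹ ^ 2 * f (x₀ + ε i • u i x)) ∂μ) l := by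
  set P := (fderiv ℝ (fderiv ℝ f) x₀).lpPairing μ 2 2
  obtain ⟨r, hr, hlower⟩ := exists_fderiv_fderiv_sub_le_inv_sq_mul hnonneg hzero hf hδ
  obtain ⟨w, hw, hsmall⟩ :=
    exists_tendsto_Lp_forall_norm_smul_lt_or_eq_zero ENNReal.ofNat_ne_top hC hε hr v
  have henergy (i : ι) : ENNReal.ofReal (P (u i) (w i) - 1 / 2 * P (w i) (w i) - δ * C ^ 2) ≤
      ∫⁻ x, ENNReal.ofReal ((ε i)⁻¹ ^ 2 * f (x₀ + ε i • u i x)) ∂μ := by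
    refine le_trans ?_ (ofReal_lpPairing_sub_le_lintegral _ (u i) (w i) δ
      ((hsmall i).mono fun x hx ↦ hlower (ε i) (hε_ne i) (u i x) (w i x) hx))
    gcongr
    exact hC i
  have hquad : Tendsto (fun i ↦ P (u i) (w i) - 1 / 2 * P (w i) (w i) - δ * C ^ 2) l
      (𝓝 (1 / 2 * P v v - δ * C ^ 2)) :=
    (tendsto_apply_sub_half_apply_self_of_tendsto_toWeakSpace P hu hC hw).sub_const _
  rw [← (ENNReal.tendsto_ofReal hquad).liminf_eq]
  exact liminf_le_liminf (.of_forall henergy)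

theorem ofReal_half_integral_fderiv_fderiv_le_liminf {l : Filter ι} [l.NeBot]
    {u : ι → Lp E 2 μ} {v : Lp E 2 μ} {C : ℝ} (hC : ∀ i, ‖u i‖ ≤ C)
    (hu : Tendsto (fun i ↦ toWeakSpace ℝ (Lp E 2 μ) (u i)) l (𝓝 (toWeakSpace ℝ (Lp E 2 μ) v)))
    {ε : ι → ℝ} (hε_ne : ∀ i, ε i ≠ 0) (hε : Tendsto ε l (𝓝 0)) {f : E → ℝ} {x₀ : E}
    (hnonneg : ∀ y, 0 ≤ f y) (hzero : f x₀ = 0) (hf : ContDiffAt ℝ 2 f x₀) :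
    ENNReal.ofReal (1 / 2 * ∫ x, fderiv ℝ (fderiv ℝ f) x₀ (v x) (v x) ∂μ) ≤
      liminf (fun i ↦ ∫⁻ x, ENNReal.ofReal ((ε i)⁻¹ ^ 2 * f (x₀ + ε i • u i x)) ∂μ) l := by
  rw [← ContinuousLinearMap.lpPairing_eq_integral]
  have hδ : Tendsto (fun δ ↦ ENNReal.ofReal
      (1 / 2 * (fderiv ℝ (fderiv ℝ f) x₀).lpPairing μ 2 2 v v - δ * C ^ 2)) (𝓝[>] 0)
      (𝓝 (ENNReal.ofReal (1 / 2 * (fderiv ℝ (fderiv ℝ f) x₀).lpPairing μ 2 2 v v))) :=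
    tendsto_nhdsWithin_of_tendsto_nhds <|
      (ENNReal.continuous_ofReal.comp (by fun_prop)).tendsto' _ _ (by simp)
  exact le_of_tendsto hδ <| eventually_mem_nhdsWithin.mono fun δ hδ_pos ↦
    ofReal_half_lpPairing_sub_le_liminf hC hu hε_ne hε hnonneg hzero hf hδ_pos

end LowerSemicontinuity

section RescaledStrain

variable {𝔸 : Type*} [NormedRing 𝔸] [NormedAlgebra ℝ 𝔸]

/-- The strain `A = ε⁻¹ (exp (ε G) (1 + ε F) - 1)`, which turns the energy density
`Φ (exp (ε G) (1 + ε F))` into `Φ (1 + ε A)`; it takes the junk value `0` at `ε = 0`. -/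
noncomputable def rescaledStrain (ε : ℝ) (F G : 𝔸) : 𝔸 :=
  ε⁻¹ • (NormedSpace.exp (ε • G) * (1 + ε • F) - 1)

theorem one_add_smul_rescaledStrain {ε : ℝ} (hε : ε ≠ 0) (F G : 𝔸) :
    1 + ε • rescaledStrain ε F G = NormedSpace.exp (ε • G) * (1 + ε • F) := by
  rw [rescaledStrain, smul_inv_smul₀ hε, add_sub_cancel]

variable [CompleteSpace 𝔸]

theorem norm_rescaledStrain_sub_add_le {ε : ℝ} (hε : ε ≠ 0) (F G : 𝔸) :
    ‖rescaledStrain ε F G - (F + G)‖ ≤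
      |ε| * ‖G‖ * Real.exp (|ε| * ‖G‖) * (‖F‖ + ‖G‖) := by
  have hexp_one : ‖NormedSpace.exp (ε • G) - 1‖ ≤ |ε| * ‖G‖ * Real.exp (|ε| * ‖G‖) := by
    simpa [norm_smul] using norm_exp_sub_sum_range_le (ε • G) one_ne_zero
  have hexp_two : ‖NormedSpace.exp (ε • G) - 1 - ε • G‖ ≤
      (|ε| * ‖G‖) ^ 2 * Real.exp (|ε| * ‖G‖) := by
    simpa [norm_smul, Finset.sum_range_succ, sub_add_eq_sub_sub] using
      norm_exp_sub_sum_range_le (ε • G) two_ne_zero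
  have hsplit : rescaledStrain ε F G - (F + G) =
      ε⁻¹ • (NormedSpace.exp (ε • G) - 1 - ε • G) + (NormedSpace.exp (ε • G) - 1) * F := by
    have hcancel (H : 𝔸) : ε⁻¹ • ε • H = H := inv_smul_smul₀ hε H
    simp only [rescaledStrain, mul_add, mul_smul_comm, smul_sub, smul_add, hcancel, sub_mul,
      one_mul, mul_one]
    abel
  calc ‖rescaledStrain ε F G - (F + G)‖
      ≤ |ε|⁻¹ * ((|ε| * ‖G‖) ^ 2 * Real.exp (|ε| * ‖G‖)) +
          |ε| * ‖G‖ * Real.exp (|ε| * ‖G‖) * ‖F‖ := by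
        rw [hsplit, ← abs_inv, ← Real.norm_eq_abs ε⁻¹]
        refine norm_add_le_of_le ((norm_smul_le _ _).trans ?_) ((norm_mul_le _ _).trans ?_)
        · gcongr
        · gcongr
    _ = |ε| * ‖G‖ * Real.exp (|ε| * ‖G‖) * (‖F‖ + ‖G‖) := by
        have := abs_ne_zero.2 hε
        field_simp
        ring

end RescaledStrain

section RescaledStrainLp

open scoped ENNReal

variable {α 𝔸 : Type*} [MeasurableSpace α] {μ : Measure α} [NormedRing 𝔸] [NormedAlgebra ℝ 𝔸]
  [CompleteSpace 𝔸] {p : ℝ≥0∞} {F G : α → 𝔸} {ε K : ℝ}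

theorem ae_norm_rescaledStrain_sub_add_le (hε : ε ≠ 0) (hGK : ∀ᵐ x ∂μ, ‖G x‖ ≤ K) :
    ∀ᵐ x ∂μ, ‖rescaledStrain ε (F x) (G x) - (F x + G x)‖ ≤
      |ε| * K * Real.exp (|ε| * K) * ‖‖F x‖ + ‖G x‖‖ := by
  filter_upwards [hGK] with x hx
  have hK : 0 ≤ K := (norm_nonneg _).trans hx
  rw [Real.norm_of_nonneg (by positivity : 0 ≤ ‖F x‖ + ‖G x‖)]
  refine (norm_rescaledStrain_sub_add_le hε (F x) (G x)).trans ?_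
  gcongr

theorem memLp_rescaledStrain (hF : MemLp F p μ) (hG : MemLp G p μ) (hε : ε ≠ 0)
    (hGK : ∀ᵐ x ∂μ, ‖G x‖ ≤ K) : MemLp (fun x ↦ rescaledStrain ε (F x) (G x)) p μ := by
  let : NormedAlgebra ℚ 𝔸 := .restrictScalars ℚ ℝ 𝔸
  have hmeas : AEStronglyMeasurable (fun x ↦ rescaledStrain ε (F x) (G x)) μ :=
    (((NormedSpace.exp_continuous.comp_aestronglyMeasurable (hG.1.const_smul ε)).mul
      (aestronglyMeasurable_const.add (hF.1.const_smul ε))).sub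
      aestronglyMeasurable_const).const_smul ε⁻¹
  have hdiff : MemLp (fun x ↦ rescaledStrain ε (F x) (G x) - (F x + G x)) p μ :=
    (hF.norm.add hG.norm).of_le_mul (hmeas.sub (hF.add hG).1)
      (ae_norm_rescaledStrain_sub_add_le hε hGK)
  exact (memLp_congr_ae (.of_forall fun x ↦ sub_add_cancel _ _)).1 (hdiff.add (hF.add hG))

theorem norm_toLp_rescaledStrain_sub_le [Fact (1 ≤ p)] (hF : MemLp F p μ) (hG : MemLp G p μ)
    (hε : ε ≠ 0) (hK : 0 ≤ K) (hGK : ∀ᵐ x ∂μ, ‖G x‖ ≤ K) :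
    ‖(memLp_rescaledStrain hF hG hε hGK).toLp _ - (hF.toLp F + hG.toLp G)‖ ≤
      |ε| * K * Real.exp (|ε| * K) * (‖hF.toLp F‖ + ‖hG.toLp G‖) := by
  have hle : ‖(memLp_rescaledStrain hF hG hε hGK).toLp _ - (hF.toLp F + hG.toLp G)‖ ≤
      |ε| * K * Real.exp (|ε| * K) * ‖hF.norm.toLp _ + hG.norm.toLp _‖ := by
    rw [← MemLp.toLp_add, ← MemLp.toLp_add, ← MemLp.toLp_sub]
    refine Lp.norm_le_mul_norm_of_ae_le_mul ?_
    filter_upwards [ae_norm_rescaledStrain_sub_add_le (F := F) hε hGK,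
      ((memLp_rescaledStrain hF hG hε hGK).sub (hF.add hG)).coeFn_toLp,
      (hF.norm.add hG.norm).coeFn_toLp] with x hx hdiff hsum
    rwa [hdiff, hsum]
  have hnorm {H : α → 𝔸} (hH : MemLp H p μ) : ‖hH.norm.toLp _‖ = ‖hH.toLp H‖ := by
    simp only [Lp.norm_toLp, eLpNorm_norm]
  refine hle.trans ?_
  gcongr
  exact (norm_add_le _ _).trans_eq (by rw [hnorm hF, hnorm hG])

theorem tendsto_toWeakSpace_toLp_rescaledStrain [Fact (1 ≤ p)] {F G : ℕ → α → 𝔸}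
    {Flim Glim : α → 𝔸} {ε : ℕ → ℝ} (hε_ne : ∀ j, ε j ≠ 0) (hε : Tendsto ε atTop (𝓝 0))
    (hF : ∀ j, MemLp (F j) p μ) (hFlim : MemLp Flim p μ)
    (hFweak : Tendsto (fun j ↦ toWeakSpace ℝ (Lp 𝔸 p μ) ((hF j).toLp (F j))) atTop
      (𝓝 (toWeakSpace ℝ (Lp 𝔸 p μ) (hFlim.toLp Flim))))
    (hG : ∀ j, MemLp (G j) p μ) (hGlim : MemLp Glim p μ)
    (hGweak : Tendsto (fun j ↦ toWeakSpace ℝ (Lp 𝔸 p μ) ((hG j).toLp (G j))) atTop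
      (𝓝 (toWeakSpace ℝ (Lp 𝔸 p μ) (hGlim.toLp Glim))))
    (hK : 0 ≤ K) (hGK : ∀ j, ∀ᵐ x ∂μ, ‖G j x‖ ≤ K) :
    Tendsto (fun j ↦ toWeakSpace ℝ (Lp 𝔸 p μ)
        ((memLp_rescaledStrain (hF j) (hG j) (hε_ne j) (hGK j)).toLp _)) atTop
      (𝓝 (toWeakSpace ℝ (Lp 𝔸 p μ) ((hFlim.add hGlim).toLp _))) := by
  obtain ⟨C, hC⟩ := exists_norm_le_of_tendsto_toWeakSpace hFweak
  obtain ⟨D, hD⟩ := exists_norm_le_of_tendsto_toWeakSpace hGweak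
  have hscale : Tendsto (fun j ↦ |ε j| * K * Real.exp (|ε j| * K) * (C + D)) atTop (𝓝 0) := by
    have hcont : Continuous fun t : ℝ ↦ |t| * K * Real.exp (|t| * K) * (C + D) := by fun_prop
    exact (hcont.tendsto' 0 0 (by simp)).comp hε
  have hdiff : Tendsto (fun j ↦ (memLp_rescaledStrain (hF j) (hG j) (hε_ne j) (hGK j)).toLp _ -
      ((hF j).toLp (F j) + (hG j).toLp (G j))) atTop (𝓝 0) := by
    refine squeeze_zero_norm (fun j ↦ ?_) hscale
    refine (norm_toLp_rescaledStrain_sub_le (hF j) (hG j) (hε_ne j) hK (hGK j)).trans ?_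
    gcongr
    · exact hC j
    · exact hD j
  have hsum := (tendsto_toWeakSpace_of_tendsto (𝕜 := ℝ) hdiff).add (hFweak.add hGweak)
  simpa only [← map_add, sub_add_cancel, zero_add, ← MemLp.toLp_add] using hsum

theorem lintegral_one_add_smul_toLp_rescaledStrain (hF : MemLp F p μ) (hG : MemLp G p μ)
    (hε : ε ≠ 0) (hGK : ∀ᵐ x ∂μ, ‖G x‖ ≤ K) (Φ : 𝔸 → ℝ) :
    ∫⁻ x, ENNReal.ofReal
        (ε⁻¹ ^ 2 * Φ (1 + ε • (memLp_rescaledStrain hF hG hε hGK).toLp _ x)) ∂μ =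
      ENNReal.ofReal (ε⁻¹ ^ 2) *
        ∫⁻ x, ENNReal.ofReal (Φ (NormedSpace.exp (ε • G x) * (1 + ε • F x))) ∂μ := by
  rw [← lintegral_const_mul' _ _ ENNReal.ofReal_ne_top]
  refine lintegral_congr_ae ?_
  filter_upwards [(memLp_rescaledStrain hF hG hε hGK).coeFn_toLp] with x hx
  rw [hx, one_add_smul_rescaledStrain hε, ENNReal.ofReal_mul (by positivity)]

end RescaledStrainLp

theorem tendsto_toWeakSpace_toLp_of_forall_integral_inner {ι α 𝕜 E : Type*} [MeasurableSpace α]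
    {μ : Measure α} [RCLike 𝕜] [NormedAddCommGroup E] [InnerProductSpace 𝕜 E] [CompleteSpace E]
    {l : Filter ι} {f : ι → α → E} {g : α → E} (hf : ∀ i, MemLp (f i) 2 μ) (hg : MemLp g 2 μ)
    (h : ∀ w : α → E, MemLp w 2 μ → Tendsto (fun i ↦ ∫ x, inner 𝕜 (w x) (f i x) ∂μ) l
      (𝓝 (∫ x, inner 𝕜 (w x) (g x) ∂μ))) :
    Tendsto (fun i ↦ toWeakSpace 𝕜 (Lp E 2 μ) ((hf i).toLp (f i))) l
      (𝓝 (toWeakSpace 𝕜 (Lp E 2 μ) (hg.toLp g))) := by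
  refine tendsto_toWeakSpace_of_forall_inner fun w ↦ ?_
  have hinner {v : α → E} (hv : MemLp v 2 μ) :
      inner 𝕜 w (hv.toLp v) = ∫ x, inner 𝕜 (w x) (v x) ∂μ :=
    (L2.inner_def _ _).trans <| integral_congr_ae <| hv.coeFn_toLp.mono fun x hx ↦ by
      simp only [hx]
  simpa only [hinner] using h w (Lp.memLp w)

/-- The Frobenius inner product `A : B` as an inner product structure inducing the Frobenius norm,
used to read weak convergence in `L²` off integrals of `F_j : G`. The factors are swapped so that
`inner ℝ w f` unfolds to `∑ a, ∑ b, f a b * w a b`, with the fixed test matrix `w` second. -/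
noncomputable abbrev frobeniusInnerProductSpace {m n : Type*} [Fintype m] [Fintype n] :
    InnerProductSpace ℝ (Matrix m n ℝ) where
  inner A B := ∑ a, ∑ b, B a b * A a b
  norm_sq_eq_re_inner A := by
    rw [Matrix.frobenius_norm_def, ← Real.rpow_natCast, ← Real.rpow_mul (by positivity)]
    simp [← sq]
  conj_inner_symm A B := by simp [mul_comm]
  add_left A B C := by simp [mul_add, Finset.sum_add_distrib]
  smul_left A B r := by simp [Finset.mul_sum, mul_left_comm]

theorem tendsto_toWeakSpace_toLp_of_forall_integral_sum {ι α m n : Type*} [MeasurableSpace α]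
    {μ : Measure α} [Fintype m] [Fintype n] {l : Filter ι} {f : ι → α → Matrix m n ℝ}
    {g : α → Matrix m n ℝ} (hf : ∀ i, MemLp (f i) 2 μ) (hg : MemLp g 2 μ)
    (h : ∀ w : α → Matrix m n ℝ, MemLp w 2 μ →
      Tendsto (fun i ↦ ∫ x, ∑ a, ∑ b, f i x a b * w x a b ∂μ) l
        (𝓝 (∫ x, ∑ a, ∑ b, g x a b * w x a b ∂μ))) :
    Tendsto (fun i ↦ toWeakSpace ℝ (Lp (Matrix m n ℝ) 2 μ) ((hf i).toLp (f i))) l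
      (𝓝 (toWeakSpace ℝ (Lp (Matrix m n ℝ) 2 μ) (hg.toLp g))) :=
  let : InnerProductSpace ℝ (Matrix m n ℝ) := frobeniusInnerProductSpace
  tendsto_toWeakSpace_toLp_of_forall_integral_inner hf hg h

theorem stmt19_general {α 𝔸 : Type*} [MeasurableSpace α] {μ : Measure α} [NormedRing 𝔸]
    [NormedAlgebra ℝ 𝔸] [CompleteSpace 𝔸] {Φ : 𝔸 → ℝ} (hΦnonneg : ∀ A, 0 ≤ Φ A)
    (hΦone : Φ 1 = 0) (hC2 : ContDiffAt ℝ 2 Φ 1)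
    {ε : ℕ → ℝ} (hε_ne : ∀ j, ε j ≠ 0) (hε : Tendsto ε atTop (𝓝 0))
    {F G : ℕ → α → 𝔸} {Flim Glim : α → 𝔸}
    (hF : ∀ j, MemLp (F j) 2 μ) (hFlim : MemLp Flim 2 μ)
    (hFweak : Tendsto (fun j ↦ toWeakSpace ℝ (Lp 𝔸 2 μ) ((hF j).toLp (F j))) atTop
      (𝓝 (toWeakSpace ℝ (Lp 𝔸 2 μ) (hFlim.toLp Flim))))
    (hG : ∀ j, MemLp (G j) 2 μ) (hGlim : MemLp Glim 2 μ)
    (hGweak : Tendsto (fun j ↦ toWeakSpace ℝ (Lp 𝔸 2 μ) ((hG j).toLp (G j))) atTop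
      (𝓝 (toWeakSpace ℝ (Lp 𝔸 2 μ) (hGlim.toLp Glim))))
    (hGbdd : ∃ K : ℝ, ∀ j, ∀ᵐ x ∂μ, ‖G j x‖ ≤ K) :
    ENNReal.ofReal
        (1 / 2 * ∫ x, iteratedFDeriv ℝ 2 Φ 1 ![Flim x + Glim x, Flim x + Glim x] ∂μ) ≤
      liminf (fun j ↦ ENNReal.ofReal ((ε j)⁻¹ ^ 2) *
        ∫⁻ x, ENNReal.ofReal (Φ (NormedSpace.exp (ε j • G j x) * (1 + ε j • F j x))) ∂μ)
        atTop := by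
  obtain ⟨K, hGK⟩ := hGbdd
  have hGK' (j : ℕ) : ∀ᵐ x ∂μ, ‖G j x‖ ≤ max K 0 := (hGK j).mono fun x hx ↦ le_max_of_le_left hx
  have hweak := tendsto_toWeakSpace_toLp_rescaledStrain hε_ne hε hF hFlim hFweak hG hGlim hGweak
    (le_max_right K 0) hGK'
  obtain ⟨C, hC⟩ := exists_norm_le_of_tendsto_toWeakSpace hweak
  have hlsc := ofReal_half_integral_fderiv_fderiv_le_liminf hC hweak hε_ne hε hΦnonneg hΦone hC2
  have henergy (j : ℕ) := lintegral_one_add_smul_toLp_rescaledStrain (hF j) (hG j) (hε_ne j)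
    (hGK' j) Φ
  simp only [henergy] at hlsc
  refine le_trans (le_of_eq ?_) hlsc
  congr 2
  refine integral_congr_ae ?_
  filter_upwards [(hFlim.add hGlim).coeFn_toLp] with x hx
  simp [hx, iteratedFDeriv_two_apply]

/-- The Γ-liminf inequality for the rescaled elastic energies: if `Φ ≥ 0` is `C²` near `SO(d)`,
frame-indifferent, vanishing on `SO(d)`, with `Φ(F) ≥ g_p(dist(F, SO(d)))`, `ε_j → 0⁺`,
`F_j ⇀ F` weakly in `L²(Ω; ℝ^{d×d})`, and `G_j → G` strongly in `L²` with a uniform `L^∞`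
bound, then
`liminf_j ε_j⁻² ∫_Ω Φ(exp(ε_j G_j)(I + ε_j F_j)) dx ≥ (1/2) ∫_Ω D²Φ(I)[F + G, F + G] dx`.
Since `Φ ≥ 0`, the energies are written via the lower Lebesgue integral in `ℝ≥0∞`. -/
theorem stmt19 (d : ℕ) (hd : 2 ≤ d) (p : ℝ) (hp : 2 ≤ p)
    (Ω : Set (EuclideanSpace ℝ (Fin d))) (hΩmeas : MeasurableSet Ω)
    (hΩbdd : Bornology.IsBounded Ω) (hΩfin : volume Ω < ⊤)
    (Φ : Matrix (Fin d) (Fin d) ℝ → ℝ) (hΦnonneg : ∀ F, 0 ≤ Φ F)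
    (U : Set (Matrix (Fin d) (Fin d) ℝ)) (hUopen : IsOpen U) (hSOU : SOd d ⊆ U)
    (hC2 : ContDiffOn ℝ 2 Φ U)
    (hframe : ∀ Q ∈ SOd d, ∀ F : Matrix (Fin d) (Fin d) ℝ, Φ (Q * F) = Φ F)
    (hΦSO : ∀ R ∈ SOd d, Φ R = 0)
    (hcoer : ∀ F : Matrix (Fin d) (Fin d) ℝ, gp p (Metric.infDist F (SOd d)) ≤ Φ F)
    (ε : ℕ → ℝ) (hεpos : ∀ j, 0 < ε j) (hε0 : Tendsto ε atTop (𝓝 0))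
    (F : ℕ → EuclideanSpace ℝ (Fin d) → Matrix (Fin d) (Fin d) ℝ)
    (Flim : EuclideanSpace ℝ (Fin d) → Matrix (Fin d) (Fin d) ℝ)
    (hF : ∀ j, MemLp (F j) 2 (volume.restrict Ω))
    (hFlim : MemLp Flim 2 (volume.restrict Ω))
    (hFweak : ∀ G : EuclideanSpace ℝ (Fin d) → Matrix (Fin d) (Fin d) ℝ,
      MemLp G 2 (volume.restrict Ω) →
      Tendsto (fun j => ∫ x in Ω, ∑ a, ∑ b, F j x a b * G x a b) atTop
        (𝓝 (∫ x in Ω, ∑ a, ∑ b, Flim x a b * G x a b)))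
    (G : ℕ → EuclideanSpace ℝ (Fin d) → Matrix (Fin d) (Fin d) ℝ)
    (Glim : EuclideanSpace ℝ (Fin d) → Matrix (Fin d) (Fin d) ℝ)
    (hG : ∀ j, MemLp (G j) 2 (volume.restrict Ω))
    (hGlim : MemLp Glim 2 (volume.restrict Ω))
    (hGbdd : ∃ K : ℝ, ∀ j, ∀ x ∈ Ω, ‖G j x‖ ≤ K)
    (hGstrong : Tendsto
      (fun j => eLpNorm (fun x => G j x - Glim x) 2 (volume.restrict Ω)) atTop (𝓝 0)) :
    ENNReal.ofReal
        ((1 / 2) * ∫ x in Ω,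
          iteratedFDeriv ℝ 2 Φ 1 ![Flim x + Glim x, Flim x + Glim x]) ≤
      Filter.liminf (fun j => ENNReal.ofReal ((ε j)⁻¹ ^ 2) *
        ∫⁻ x in Ω, ENNReal.ofReal
          (Φ (NormedSpace.exp ((ε j) • G j x) * (1 + (ε j) • F j x)))) atTop := by
  have hone : (1 : Matrix (Fin d) (Fin d) ℝ) ∈ SOd d := by simp [SOd]
  have hFweak' := tendsto_toWeakSpace_toLp_of_forall_integral_sum hF hFlim hFweak
  have hGweak := tendsto_toWeakSpace_of_tendsto (𝕜 := ℝ)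
    ((Lp.tendsto_Lp_iff_tendsto_eLpNorm'' G hG Glim hGlim).2 hGstrong)
  have hGbdd' : ∃ K : ℝ, ∀ j, ∀ᵐ x ∂volume.restrict Ω, ‖G j x‖ ≤ K :=
    hGbdd.imp fun K hK j ↦ ae_restrict_of_forall_mem hΩmeas (hK j)
  -- The ring structure is explicit so that its norm is the Frobenius norm of the statement.
  exact @stmt19_general _ (Matrix (Fin d) (Fin d) ℝ) _ (volume.restrict Ω)
    Matrix.frobeniusNormedRing Matrix.frobeniusNormedAlgebra inferInstance Φ hΦnonneg (hΦSO 1 hone)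
    (hC2.contDiffAt (hUopen.mem_nhds (hSOU hone))) ε (fun j ↦ (hεpos j).ne') hε0 F G Flim Glim
    hF hFlim hFweak' hG hGlim hGweak hGbdd'
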